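/- arXiv:2006.09492 — 3 statements merged into one kernel-verified Lean document; each statement's English description precedes it below -/
import Mathlib

section
/- For n ∈ ℕ and k ∈ {0,…,n−1}, the internal solid angle of the n-dimensional regular crosspolytope at a k-dimensional face equals P(√(k+1)·ξ_{n−k} ≥ |ξ_1|+…+|ξ_{n−k−1}|), where ξ_1,…,ξ_{n−k} are i.i.d. standard normal. -/
open Finset MeasureTheory ProbabilityTheory

/-!
The tangent cone of the crosspolytope at `a` consists of the directions along which the one-sided
derivative of the `ℓ¹` norm at `a` is nonpositive. Evaluated at a standard Gaussian vector, this
derivative is a sum of independent terms: a signed normal variable for each coordinate in the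
support of `a`, and the absolute value of a normal variable for each other coordinate. The
characteristic function of the sum shows that the `k + 1` signed variables can be replaced by a
single one with coefficient `-√(k + 1)`.
-/

/-- The function `x ↦ c * x`, replaced by `x ↦ |x|` if `c = 0`. For `c = sign a` it is the
one-sided derivative of `|·|` at `a` in the direction `x`. -/
noncomputable def linearOrAbs (c x : ℝ) : ℝ := if c = 0 then |x| else c * x

@[fun_prop]
theorem measurable_linearOrAbs (c : ℝ) : Measurable (linearOrAbs c) := by
  unfold linearOrAbs
  split_ifs <;> fun_prop

section TangentCone

open Filter Topology

theorem abs_add_mul_linearOrAbs_sign_le (a v : ℝ) {ε : ℝ} (hε : 0 ≤ ε) :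
    |a| + ε * linearOrAbs (SignType.sign a) v ≤ |a + ε * v| := by
  rcases lt_trichotomy a 0 with ha | rfl | ha
  · simpa [linearOrAbs, ha, abs_of_neg, add_comm] using neg_le_abs (a + ε * v)
  · simp [linearOrAbs, abs_mul, abs_of_nonneg hε]
  · simpa [linearOrAbs, ha, abs_of_pos] using le_abs_self (a + ε * v)

theorem eventually_abs_add_mul_eq (a v : ℝ) :
    ∀ᶠ ε in 𝓝[>] (0 : ℝ), |a + ε * v| = |a| + ε * linearOrAbs (SignType.sign a) v := by
  have tendsto_a : Tendsto (fun ε ↦ a + ε * v) (𝓝[>] 0) (𝓝 a) :=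
    tendsto_nhdsWithin_of_tendsto_nhds (Continuous.tendsto' (by fun_prop) _ _ (by simp))
  rcases lt_trichotomy a 0 with ha | rfl | ha
  · filter_upwards [tendsto_a.eventually_lt_const ha] with ε hε
    simp [linearOrAbs, ha, abs_of_neg, hε, add_comm]
  · filter_upwards [self_mem_nhdsWithin] with ε hε
    simp [linearOrAbs, abs_mul, abs_of_pos (Set.mem_Ioi.1 hε)]
  · filter_upwards [tendsto_a.eventually_const_lt ha] with ε hε
    simp [linearOrAbs, ha, abs_of_pos, hε]

theorem exists_pos_sum_abs_add_smul_le_iff {ι : Type*} [Fintype ι] (a v : ι → ℝ) :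
    (∃ ε : ℝ, 0 < ε ∧ ∑ i, |(a + ε • v) i| ≤ ∑ i, |a i|) ↔
      ∑ i, linearOrAbs (SignType.sign (a i)) (v i) ≤ 0 := by
  simp only [Pi.add_apply, Pi.smul_apply, smul_eq_mul]
  constructor
  · rintro ⟨ε, hε, hle⟩
    have hderiv : ∑ i, |a i| + ε * ∑ i, linearOrAbs (SignType.sign (a i)) (v i) ≤ ∑ i, |a i| := by
      rw [mul_sum, ← sum_add_distrib]
      exact (sum_le_sum fun i _ ↦ abs_add_mul_linearOrAbs_sign_le (a i) (v i) hε.le).trans hle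
    exact nonpos_of_mul_nonpos_right (by linarith) hε
  · intro hnonpos
    obtain ⟨ε, heq, hε⟩ := ((eventually_all.2 fun i ↦ eventually_abs_add_mul_eq (a i) (v i)).and
      self_mem_nhdsWithin).exists
    refine ⟨ε, hε, ?_⟩
    rw [sum_congr rfl fun i _ ↦ heq i, sum_add_distrib, ← mul_sum]
    exact add_le_of_nonpos_right (mul_nonpos_of_nonneg_of_nonpos (Set.mem_Ioi.1 hε).le hnonpos)

end TangentCone

section GaussianLaw

variable {ι κ : Type*} [Fintype ι] [Fintype κ]

theorem charFun_map_sum_comp_pi {E : ι → Type*} [∀ i, MeasurableSpace (E i)]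
    (μ : ∀ i, Measure (E i)) [∀ i, IsProbabilityMeasure (μ i)] {f : ∀ i, E i → ℝ}
    (hf : ∀ i, Measurable (f i)) (t : ℝ) :
    charFun ((Measure.pi μ).map fun x ↦ ∑ i, f i (x i)) t =
      ∏ i, charFun ((μ i).map (f i)) t := by
  have hprob (i : ι) : IsProbabilityMeasure ((μ i).map (f i)) :=
    Measure.isProbabilityMeasure_map (hf i).aemeasurable
  have hmap : (Measure.pi μ).map (fun x ↦ ∑ i, f i (x i)) =
      (Measure.pi fun i ↦ (μ i).map (f i)).map fun y ↦ ∑ i, y i := by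
    rw [← Measure.pi_map_pi fun i ↦ (hf i).aemeasurable,
      Measure.map_map (by fun_prop) (by fun_prop)]
    rfl
  rw [hmap, charFun_map_sum_pi_eq_prod, prod_apply]

theorem charFun_map_linearOrAbs_gaussianReal (c t : ℝ) :
    charFun ((gaussianReal 0 1).map (linearOrAbs c)) t =
      (if c = 0 then charFun ((gaussianReal 0 1).map fun x ↦ |x|) t else 1) *
        Complex.exp (-(c ^ 2 * t ^ 2 / 2)) := by
  by_cases hc : c = 0
  · have habs : linearOrAbs c = fun x ↦ |x| := by ext x; simp [linearOrAbs, hc]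
    rw [habs]
    simp [hc]
  · have hmul : linearOrAbs c = (c * ·) := by ext x; simp [linearOrAbs, hc]
    simp [hmul, hc, gaussianReal_map_const_mul, charFun_gaussianReal]

theorem charFun_map_sum_linearOrAbs_gaussianReal (c : ι → ℝ) (t : ℝ) :
    charFun ((Measure.pi fun _ ↦ gaussianReal 0 1).map fun x ↦ ∑ i, linearOrAbs (c i) (x i)) t =
      charFun ((gaussianReal 0 1).map fun x ↦ |x|) t ^ #{i | c i = 0} *
        Complex.exp (-((∑ i, c i ^ 2 : ℝ) * t ^ 2 / 2)) := by
  rw [charFun_map_sum_comp_pi _ fun i ↦ measurable_linearOrAbs (c i)]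
  simp only [charFun_map_linearOrAbs_gaussianReal, prod_mul_distrib, prod_ite, prod_const,
    one_pow, mul_one, ← Complex.exp_sum, sum_neg_distrib, ← sum_div, ← sum_mul]
  push_cast
  rfl

theorem map_sum_linearOrAbs_gaussianReal_congr {c : ι → ℝ} {d : κ → ℝ}
    (hcard : #{i | c i = 0} = #{j | d j = 0}) (hsq : ∑ i, c i ^ 2 = ∑ j, d j ^ 2) :
    (Measure.pi fun _ ↦ gaussianReal 0 1).map (fun x ↦ ∑ i, linearOrAbs (c i) (x i)) =
      (Measure.pi fun _ ↦ gaussianReal 0 1).map fun y ↦ ∑ j, linearOrAbs (d j) (y j) := by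
  refine Measure.ext_of_charFun (funext fun t ↦ ?_)
  rw [charFun_map_sum_linearOrAbs_gaussianReal, charFun_map_sum_linearOrAbs_gaussianReal,
    hcard, hsq]

theorem gaussian_sum_linearOrAbs_nonpos_congr {c : ι → ℝ} {d : κ → ℝ}
    (hcard : #{i | c i = 0} = #{j | d j = 0}) (hsq : ∑ i, c i ^ 2 = ∑ j, d j ^ 2) :
    (Measure.pi fun _ ↦ gaussianReal 0 1) {x | ∑ i, linearOrAbs (c i) (x i) ≤ 0} =
      (Measure.pi fun _ ↦ gaussianReal 0 1) {y | ∑ j, linearOrAbs (d j) (y j) ≤ 0} := by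
  have hlaw := DFunLike.congr_fun (map_sum_linearOrAbs_gaussianReal_congr hcard hsq) (Set.Iic 0)
  rwa [Measure.map_apply (by fun_prop) measurableSet_Iic,
    Measure.map_apply (by fun_prop) measurableSet_Iic] at hlaw

end GaussianLaw

theorem sum_linearOrAbs_single {κ : Type*} [Fintype κ] [DecidableEq κ] (j₀ : κ) {c : ℝ}
    (hc : c ≠ 0) (x : κ → ℝ) :
    ∑ j, linearOrAbs ((Pi.single j₀ c : κ → ℝ) j) (x j) =
      c * x j₀ + ∑ j ∈ univ.erase j₀, |x j| := by
  rw [← add_sum_erase _ _ (mem_univ j₀)]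
  congr 1
  · simp [linearOrAbs, hc]
  · exact sum_congr rfl fun j hj ↦ by simp [linearOrAbs, ne_of_mem_erase hj]

theorem coe_sign_eq_zero_iff (x : ℝ) : (SignType.sign x : ℝ) = 0 ↔ x = 0 := by
  rcases lt_trichotomy x 0 with hx | rfl | hx <;> simp [*, ne_of_gt, ne_of_lt]

theorem sum_sign_sq {ι : Type*} [Fintype ι] (a : ι → ℝ) :
    ∑ i, (SignType.sign (a i) : ℝ) ^ 2 = #{i | a i ≠ 0} := by
  have sign_sq (x : ℝ) : (SignType.sign x : ℝ) ^ 2 = if x ≠ 0 then 1 else 0 := by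
    rcases lt_trichotomy x 0 with hx | rfl | hx <;> simp [*, ne_of_gt, ne_of_lt]
  simp only [sign_sq, sum_boole]

/-- The face having `a` in its relative interior is spanned by the vertices `sign (a i) • e_i` for
`i` in the support of `a`, so it has dimension `k`. -/
theorem stmt9_general {ι κ : Type*} [Fintype ι] [Fintype κ] [DecidableEq κ] {k : ℕ} (a : ι → ℝ)
    (ha : ∑ i, |a i| = 1) (hsupp : #{i | a i ≠ 0} = k + 1)
    (hκ : Fintype.card κ + k = Fintype.card ι) (j₀ : κ) :
    (Measure.pi fun _ : ι ↦ gaussianReal 0 1)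
      {v : ι → ℝ | ∃ ε : ℝ, 0 < ε ∧ a + ε • v ∈ {u : ι → ℝ | ∑ j, |u j| ≤ 1}} =
    (Measure.pi fun _ : κ ↦ gaussianReal 0 1)
      {x : κ → ℝ | ∑ j ∈ univ.erase j₀, |x j| ≤ √(k + 1) * x j₀} := by
  have hsqrt : √((k : ℝ) + 1) ≠ 0 := by positivity
  have hcone (v : ι → ℝ) : (∃ ε : ℝ, 0 < ε ∧ a + ε • v ∈ {u : ι → ℝ | ∑ j, |u j| ≤ 1}) ↔
      ∑ i, linearOrAbs (SignType.sign (a i)) (v i) ≤ 0 := by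
    rw [← exists_pos_sum_abs_add_smul_le_iff, ha]
    rfl
  have hhalf (x : κ → ℝ) : ∑ j ∈ univ.erase j₀, |x j| ≤ √(k + 1) * x j₀ ↔
      ∑ j, linearOrAbs ((Pi.single j₀ (-√(k + 1)) : κ → ℝ) j) (x j) ≤ 0 := by
    rw [sum_linearOrAbs_single j₀ (neg_ne_zero.2 hsqrt), neg_mul, neg_add_nonpos_iff]
  simp only [hcone, hhalf]
  apply gaussian_sum_linearOrAbs_nonpos_congr
  · have hzero_add : #{i | a i = 0} + #{i | a i ≠ 0} = Fintype.card ι :=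
      card_filter_add_card_filter_not fun i ↦ a i = 0
    have hzero_single : #{j | (Pi.single j₀ (-√(k + 1)) : κ → ℝ) j = 0} = Fintype.card κ - 1 := by
      simp [Pi.single_apply, hsqrt, filter_ne', card_erase_of_mem]
    simp only [coe_sign_eq_zero_iff, hzero_single]
    omega
  · rw [sum_sign_sq, hsupp]
    simp [Pi.single_apply, ite_pow, Real.sq_sqrt (by positivity : (0 : ℝ) ≤ k + 1)]

/-- The centroid of the face `conv {e_1, …, e_{k+1}}` of the crosspolytope in `ℝⁿ`. -/
noncomputable def faceCentroid (n k : ℕ) (i : Fin n) : ℝ :=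
  if (i : ℕ) < k + 1 then 1 / ((k : ℝ) + 1) else 0

theorem card_faceCentroid_ne_zero {n k : ℕ} (hk : k < n) :
    #{i | faceCentroid n k i ≠ 0} = k + 1 := by
  have hne (i : Fin n) : faceCentroid n k i ≠ 0 ↔ (i : ℕ) < k + 1 := by
    simp [faceCentroid, Nat.cast_add_one_ne_zero]
  simp only [hne, Fin.card_filter_val_lt]
  omega

theorem sum_abs_faceCentroid {n k : ℕ} (hk : k < n) : ∑ i, |faceCentroid n k i| = 1 := by
  have hnonneg (i : Fin n) : 0 ≤ faceCentroid n k i := by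
    unfold faceCentroid
    split_ifs <;> positivity
  simp only [abs_of_nonneg (hnonneg _)]
  simp only [faceCentroid, sum_ite, sum_const, Fin.card_filter_val_lt,
    min_eq_right (Nat.succ_le_of_lt hk)]
  simp [Nat.cast_add_one_ne_zero]

theorem sum_ite_val_lt_pred {M : Type*} [AddCommMonoid M] {m : ℕ} (hm : m - 1 < m)
    (f : Fin m → M) :
    ∑ j : Fin m, (if (j : ℕ) < m - 1 then f j else 0) = ∑ j ∈ univ.erase ⟨m - 1, hm⟩, f j := by
  rw [← sum_filter]
  congr 1
  ext j
  simp only [mem_filter_univ, mem_erase, mem_univ, and_true, ne_eq, Fin.ext_iff]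
  omega

/-- The internal solid angle of the `n`-dimensional regular crosspolytope at the `k`-dimensional
face `F = conv{e_1,…,e_{k+1}}` — the standard Gaussian measure of the (full-dimensional) tangent
cone `{v : f + εv ∈ P_n for some ε > 0}` (`f` the centroid of `F`) — equals
`P(√(k+1) ξ_{n-k} ≥ |ξ_1| + … + |ξ_{n-k-1}|)` for i.i.d. standard normal `ξ_1,…,ξ_{n-k}`. -/
theorem stmt9 (n k : ℕ) (hn : 1 ≤ n) (hk : k < n) :
    (Measure.pi fun _ : Fin n => gaussianReal 0 1)
      {v : Fin n → ℝ | ∃ ε : ℝ, 0 < ε ∧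
        ((fun i : Fin n => if (i : ℕ) < k + 1 then 1 / ((k : ℝ) + 1) else 0) + ε • v)
          ∈ {u : Fin n → ℝ | ∑ j, |u j| ≤ 1}}
    = (Measure.pi fun _ : Fin (n - k) => gaussianReal 0 1)
      {x : Fin (n - k) → ℝ |
        ∑ j : Fin (n - k), (if (j : ℕ) < n - k - 1 then |x j| else 0)
          ≤ Real.sqrt ((k : ℝ) + 1) * x ⟨n - k - 1, by omega⟩} := by
  simp only [sum_ite_val_lt_pred (Nat.sub_lt (Nat.sub_pos_of_lt hk) one_pos)]
  exact stmt9_general (faceCentroid n k) (sum_abs_faceCentroid hk) (card_faceCentroid_ne_zero hk)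
    (by simpa using Nat.sub_add_cancel hk.le) _
end

section
/- Let f := σe_{n+1} + Σ_{i=k}^n e_i be a relative interior point of a k-dimensional face F of C_n^□(σ²). Then the tangent cone of C_n^□(σ²) at F is {v ∈ ℝ^{n+1} : max_{k≤i≤n} v_i ≤ v_{n+1}/σ}, and its polar (the normal cone at F) is the positive hull of the vectors −(1/σ)e_{n+1} + e_j, j = k,…,n. -/
open Finset Matrix

/-!
The box cone is cut out by the `2n` linear inequalities `± x_i ≤ x_{n+1}/σ`. A small step from a
point of a polyhedron can only violate the constraints that are active there, and at `f` these are
the constraints `x_i ≤ x_{n+1}/σ` with `i ≥ k`: this is the tangent cone. The vectors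
`e_i - (1/σ) e_{n+1}` have the dual family `e_i`, so the coefficients of a polar vector `y` can be
read off as `y_i`, and testing `y` on `± e_i` gives their signs.
-/

section Polyhedra

open Filter

/-- The cone of feasible directions of `C` at `f`. For convex `C` this is the tangent cone `T_F` at
the face `F` whose relative interior contains `f`; unlike `tangentConeAt`, no closure is taken. -/
def feasibleDirections (R : Type*) {M : Type*} [Zero R] [LT R] [Add M] [SMul R M] (C : Set M)
    (f : M) : Set M :=
  {v | ∃ δ : R, 0 < δ ∧ f + δ • v ∈ C}

variable {𝕜 M ι : Type*} [Field 𝕜] [LinearOrder 𝕜] [IsStrictOrderedRing 𝕜] [AddCommGroup M]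
  [Module 𝕜 M]

theorem feasibleDirections_setOf_forall_le [Finite ι] {φ : ι → M →ₗ[𝕜] 𝕜} {b : ι → 𝕜} {f : M}
    (hf : ∀ i, φ i f ≤ b i) :
    feasibleDirections 𝕜 {x | ∀ i, φ i x ≤ b i} f =
      {v | ∀ i, φ i f = b i → φ i v ≤ 0} := by
  ext v
  constructor
  · rintro ⟨δ, hδ, hv⟩ i hi
    have hle : b i + δ * φ i v ≤ b i := by simpa [hi] using hv i
    exact nonpos_of_mul_nonpos_right (by linarith) hδ
  · intro hv
    -- Stepping by `t⁻¹` turns the `i`-th constraint into `φ i v ≤ t * (b i - φ i f)`.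
    have hslack : ∀ᶠ t : 𝕜 in atTop, ∀ i, φ i v ≤ t * (b i - φ i f) :=
      eventually_all.2 fun i => by
        rcases (hf i).eq_or_lt with hactive | hinactive
        · simp [hactive, hv i hactive]
        · exact (tendsto_id.atTop_mul_const (sub_pos.2 hinactive)).eventually_ge_atTop _
    obtain ⟨t, ht, ht₀⟩ := (hslack.and (eventually_gt_atTop 0)).exists
    refine ⟨t⁻¹, inv_pos.2 ht₀, fun i => ?_⟩
    have hstep : t⁻¹ * φ i v ≤ b i - φ i f := (inv_mul_le_iff₀ ht₀).2 (ht i)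
    rw [map_add, map_smul, smul_eq_mul]
    linarith

end Polyhedra

section Farkas

/-- The polar cone of a set of coordinate vectors, with respect to the dot product. The polar of a
tangent cone is the normal cone. -/
def polarCone {R m : Type*} [Fintype m] [NonUnitalNonAssocSemiring R] [LE R] (K : Set (m → R)) :
    Set (m → R) :=
  {y | ∀ v ∈ K, y ⬝ᵥ v ≤ 0}

variable {R M ι m : Type*} [CommRing R] [AddCommGroup M] [Module R M] [Fintype ι] [DecidableEq ι]
  [Fintype m]

theorem eq_sum_smul_of_biorthogonal {φ : ι → M →ₗ[R] R} {w : ι → M}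
    (hw : ∀ i j, φ i (w j) = if i = j then 1 else 0) {ψ : M →ₗ[R] R}
    (hψ : ∀ v, (∀ i, φ i v = 0) → ψ v = 0) :
    ψ = ∑ i, ψ (w i) • φ i := by
  ext v
  have hker : ψ (v - ∑ j, φ j v • w j) = 0 := hψ _ fun i => by simp [hw]
  have hv : ψ v = ∑ j, φ j v * ψ (w j) := by simpa [sub_eq_zero] using hker
  simpa [mul_comm] using hv

variable [PartialOrder R] [IsOrderedRing R]

/-- Farkas' lemma for a family of linear forms that admits a dual family of vectors. -/
theorem forall_nonpos_iff_exists_sum_smul_of_biorthogonal {φ : ι → M →ₗ[R] R} {w : ι → M}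
    (hw : ∀ i j, φ i (w j) = if i = j then 1 else 0) (S : Set ι) (ψ : M →ₗ[R] R) :
    (∀ v, (∀ i ∈ S, φ i v ≤ 0) → ψ v ≤ 0) ↔
      ∃ c : ι → R, (∀ i, 0 ≤ c i) ∧ (∀ i ∉ S, c i = 0) ∧ ψ = ∑ i, c i • φ i := by
  constructor
  · intro hψ
    have hnonneg (j : ι) : 0 ≤ ψ (w j) := by
      have := hψ (-w j) fun i _ => by rw [map_neg, hw]; split_ifs <;> simp
      simpa using this
    have hnonpos (j : ι) (hj : j ∉ S) : ψ (w j) ≤ 0 :=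
      hψ (w j) fun i hi => by rw [hw, if_neg (ne_of_mem_of_not_mem hi hj)]
    have hker (v : M) (hv : ∀ i, φ i v = 0) : ψ v = 0 := by
      refine le_antisymm (hψ v fun i _ => (hv i).le) ?_
      simpa using hψ (-v) fun i _ => by simp [hv i]
    exact ⟨fun j => ψ (w j), hnonneg, fun j hj => (hnonpos j hj).antisymm (hnonneg j),
      eq_sum_smul_of_biorthogonal hw hker⟩
  · rintro ⟨c, hc, hcS, rfl⟩ v hv
    simp only [LinearMap.sum_apply, LinearMap.smul_apply, smul_eq_mul]
    refine Finset.sum_nonpos fun i _ => ?_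
    by_cases hi : i ∈ S
    · exact mul_nonpos_of_nonneg_of_nonpos (hc i) (hv i hi)
    · simp [hcS i hi]

theorem polarCone_setOf_forall_dotProduct_nonpos {a w : ι → m → R}
    (hw : ∀ i j, a i ⬝ᵥ w j = if i = j then 1 else 0) (S : Set ι) :
    polarCone {v | ∀ i ∈ S, a i ⬝ᵥ v ≤ 0} =
      {y | ∃ c : ι → R, (∀ i, 0 ≤ c i) ∧ (∀ i ∉ S, c i = 0) ∧ y = ∑ i, c i • a i} := by
  ext y
  have hform (c : ι → R) :
      dotProductBilin R R y = ∑ i, c i • dotProductBilin R R (a i) ↔ y = ∑ i, c i • a i := by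
    rw [← dotProduct_eq_iff, LinearMap.ext_iff]
    simp [sum_dotProduct]
  have hfarkas := forall_nonpos_iff_exists_sum_smul_of_biorthogonal
    (φ := fun i => dotProductBilin R R (a i)) hw S (dotProductBilin R R y)
  simpa only [hform] using! hfarkas

end Farkas

section BoxCone

/-- The cone `C_n^□(σ²)`; the last coordinate of `Fin (n + 1)` plays the role of `x_{n+1}`. -/
def boxCone {R : Type*} [Ring R] [Lattice R] (n : ℕ) (σ : R) : Set (Fin (n + 1) → R) :=
  {x | ∀ i : Fin n, σ * |x i.castSucc| ≤ x (Fin.last n)}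

variable {𝕜 : Type*} [Field 𝕜] {n : ℕ}

/-- The outer normal `-(1/σ) e_{n+1} + e_i` of the facet `x_i = x_{n+1}/σ` of the box cone. -/
def facetNormal (σ : 𝕜) (i : Fin n) : Fin (n + 1) → 𝕜 :=
  fun j => (if (j : ℕ) = n then -(1 / σ) else 0) + (if (j : ℕ) = (i : ℕ) then 1 else 0)

theorem facetNormal_dotProduct (σ : 𝕜) (i : Fin n) (v : Fin (n + 1) → 𝕜) :
    facetNormal σ i ⬝ᵥ v = v i.castSucc - v (Fin.last n) / σ := by
  simp [facetNormal, dotProduct, Fin.sum_univ_castSucc, ← Fin.ext_iff, i.2.ne', add_mul,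
    fun j : Fin n => j.2.ne, div_eq_inv_mul, sub_eq_add_neg]

/-- The linear forms that are nonpositive exactly on the box cone: `x_i - x_{n+1}/σ` on the left
summand and `-x_i - x_{n+1}/σ` on the right one. -/
def boxForm (σ : 𝕜) : Fin n ⊕ Fin n → (Fin (n + 1) → 𝕜) →ₗ[𝕜] 𝕜 :=
  Sum.elim (fun i => LinearMap.proj i.castSucc - σ⁻¹ • LinearMap.proj (Fin.last n))
    (fun i => -LinearMap.proj i.castSucc - σ⁻¹ • LinearMap.proj (Fin.last n))

theorem boxForm_inl_apply (σ : 𝕜) (i : Fin n) (x : Fin (n + 1) → 𝕜) :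
    boxForm σ (Sum.inl i) x = x i.castSucc - x (Fin.last n) / σ := by
  simp [boxForm, div_eq_inv_mul]

theorem boxForm_inr_apply (σ : 𝕜) (i : Fin n) (x : Fin (n + 1) → 𝕜) :
    boxForm σ (Sum.inr i) x = -x i.castSucc - x (Fin.last n) / σ := by
  simp [boxForm, div_eq_inv_mul]

/-- The point `σ e_{n+1} + Σ_{i=k}^n e_i`. Coordinates are counted from `0`, so `e_k` has index
`k - 1`. -/
def facePoint (n k : ℕ) (σ : 𝕜) : Fin (n + 1) → 𝕜 :=
  fun j => if (j : ℕ) = n then σ else if k - 1 ≤ (j : ℕ) then 1 else 0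

theorem facePoint_castSucc (k : ℕ) (σ : 𝕜) (i : Fin n) :
    facePoint n k σ i.castSucc = if k - 1 ≤ (i : ℕ) then 1 else 0 := by
  simp [facePoint, i.2.ne]

theorem facePoint_last_div {σ : 𝕜} (hσ : σ ≠ 0) (k : ℕ) :
    facePoint n k σ (Fin.last n) / σ = 1 := by
  simp [facePoint, hσ]

theorem facePoint_castSucc_eq_iff {σ : 𝕜} (hσ : σ ≠ 0) (k : ℕ) (i : Fin n) :
    facePoint n k σ i.castSucc = facePoint n k σ (Fin.last n) / σ ↔ k - 1 ≤ (i : ℕ) := by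
  simp [facePoint_castSucc, facePoint_last_div hσ]

variable [LinearOrder 𝕜] [IsStrictOrderedRing 𝕜]

theorem boxCone_eq_setOf_forall_boxForm_nonpos {σ : 𝕜} (hσ : 0 < σ) :
    boxCone n σ = {x | ∀ s, boxForm σ s x ≤ 0} := by
  ext x
  simp only [boxCone, Set.mem_ofPred_eq, Sum.forall, boxForm_inl_apply, boxForm_inr_apply,
    sub_nonpos, ← forall_and, ← le_div_iff₀' hσ, abs_le']

theorem feasibleDirections_boxCone {σ : 𝕜} (hσ : 0 < σ) {f : Fin (n + 1) → 𝕜}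
    (hlower : ∀ i : Fin n, -f i.castSucc < f (Fin.last n) / σ)
    (hupper : ∀ i : Fin n, f i.castSucc ≤ f (Fin.last n) / σ) :
    feasibleDirections 𝕜 (boxCone n σ) f =
      {v | ∀ i : Fin n, f i.castSucc = f (Fin.last n) / σ →
        v i.castSucc ≤ v (Fin.last n) / σ} := by
  have hf : ∀ s, boxForm σ s f ≤ 0 := by
    rintro (i | i)
    · simpa [boxForm_inl_apply] using hupper i
    · simpa [boxForm_inr_apply] using (hlower i).le
  rw [boxCone_eq_setOf_forall_boxForm_nonpos hσ, feasibleDirections_setOf_forall_le hf]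
  simp only [Sum.forall, boxForm_inl_apply, boxForm_inr_apply, sub_eq_zero, sub_nonpos,
    (hlower _).ne, false_implies, implies_true, and_true]

theorem polarCone_setOf_forall_le_div (σ : 𝕜) (S : Set (Fin n)) :
    polarCone {v : Fin (n + 1) → 𝕜 | ∀ i ∈ S, v i.castSucc ≤ v (Fin.last n) / σ} =
      {y | ∃ c : Fin n → 𝕜, (∀ i, 0 ≤ c i) ∧ (∀ i ∉ S, c i = 0) ∧
        y = ∑ i, c i • facetNormal σ i} := by
  have hw (i j : Fin n) :
      facetNormal σ i ⬝ᵥ Pi.single j.castSucc 1 = if i = j then 1 else 0 := by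
    rw [facetNormal_dotProduct]
    simp [Pi.single_apply, (Fin.castSucc_lt_last j).ne']
  simpa only [facetNormal_dotProduct, sub_nonpos] using
    polarCone_setOf_forall_dotProduct_nonpos hw S

theorem neg_facePoint_castSucc_lt {σ : 𝕜} (hσ : σ ≠ 0) (k : ℕ) (i : Fin n) :
    -facePoint n k σ i.castSucc < facePoint n k σ (Fin.last n) / σ := by
  rw [facePoint_castSucc, facePoint_last_div hσ]
  split_ifs <;> norm_num

theorem facePoint_castSucc_le {σ : 𝕜} (hσ : σ ≠ 0) (k : ℕ) (i : Fin n) :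
    facePoint n k σ i.castSucc ≤ facePoint n k σ (Fin.last n) / σ := by
  rw [facePoint_castSucc, facePoint_last_div hσ]
  split_ifs <;> norm_num

/-- Up to reflections in the first `n` coordinates, `f` is an arbitrary point of the box cone with
`0 < f (Fin.last n)`, hence in the relative interior of an arbitrary face `F ≠ 0`. -/
theorem stmt11_general {σ : 𝕜} (hσ : 0 < σ) {f : Fin (n + 1) → 𝕜}
    (hlower : ∀ i : Fin n, -f i.castSucc < f (Fin.last n) / σ)
    (hupper : ∀ i : Fin n, f i.castSucc ≤ f (Fin.last n) / σ)
    {S : Set (Fin n)} (hS : ∀ i, f i.castSucc = f (Fin.last n) / σ ↔ i ∈ S) :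
    feasibleDirections 𝕜 (boxCone n σ) f =
        {v | ∀ i ∈ S, v i.castSucc ≤ v (Fin.last n) / σ} ∧
      polarCone {v : Fin (n + 1) → 𝕜 | ∀ i ∈ S, v i.castSucc ≤ v (Fin.last n) / σ} =
        {y | ∃ c : Fin n → 𝕜, (∀ i, 0 ≤ c i) ∧ (∀ i ∉ S, c i = 0) ∧
          y = ∑ i, c i • facetNormal σ i} :=
  ⟨by simpa only [hS] using feasibleDirections_boxCone hσ hlower hupper,
    polarCone_setOf_forall_le_div σ S⟩

end BoxCone

/-- Let `f = σ e_{n+1} + Σ_{i=k}^n e_i` be a relative interior point of a `k`-dimensional face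
`F` of `C_n^□(σ²) = {x ∈ ℝ^{n+1} : x_{n+1} ≥ σ max_i |x_i|}`. Then the tangent cone at `F` is
`{v : max_{k ≤ i ≤ n} v_i ≤ v_{n+1}/σ}`, and its polar (the normal cone at `F`) is the positive
hull of the vectors `-(1/σ) e_{n+1} + e_j`, `j = k, …, n`. -/
theorem stmt11 (n k : ℕ) (hk : 1 ≤ k) (hkn : k ≤ n) (σ : ℝ) (hσ : 0 < σ) :
    ({v : Fin (n + 1) → ℝ | ∃ δ : ℝ, 0 < δ ∧
        ((fun j : Fin (n + 1) => if (j : ℕ) = n then σ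
            else if k - 1 ≤ (j : ℕ) then (1 : ℝ) else 0) + δ • v)
          ∈ {x : Fin (n + 1) → ℝ | ∀ i : Fin n, σ * |x i.castSucc| ≤ x (Fin.last n)}}
      = {v : Fin (n + 1) → ℝ | ∀ i : Fin n, k - 1 ≤ (i : ℕ) →
          v i.castSucc ≤ v (Fin.last n) / σ}) ∧
    {y : Fin (n + 1) → ℝ |
        ∀ v ∈ {v : Fin (n + 1) → ℝ | ∀ i : Fin n, k - 1 ≤ (i : ℕ) →
            v i.castSucc ≤ v (Fin.last n) / σ},
          y ⬝ᵥ v ≤ 0}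
      = {y : Fin (n + 1) → ℝ | ∃ c : Fin n → ℝ, (∀ i, 0 ≤ c i) ∧
          (∀ i : Fin n, (i : ℕ) < k - 1 → c i = 0) ∧
          y = ∑ i : Fin n, c i • (fun j : Fin (n + 1) =>
            (if (j : ℕ) = n then -(1 / σ) else 0) + (if (j : ℕ) = (i : ℕ) then 1 else 0))} := by
  simpa only [Set.mem_ofPred_eq, not_le] using! stmt11_general hσ
    (neg_facePoint_castSucc_lt hσ.ne' k) (facePoint_castSucc_le hσ.ne' k)
    (S := {i | k - 1 ≤ (i : ℕ)}) (facePoint_castSucc_eq_iff hσ.ne' k)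
end

section
/- Let P ⊂ ℝ^n be an n-dimensional polytope with 0 in its interior, S a linear subspace of codimension l ∈ {1,…,n−1} in general position with respect to the affine hulls of all faces of P, and j ∈ {0,…,n−l−1}. If B_1, B_2 are distinct (j+l)-dimensional faces of P with B_1 ∩ S ≠ ∅, then B_1 ∩ S ≠ B_2 ∩ S. -/
open Finset

variable {V : Type*} [AddCommGroup V] [Module ℝ V]

/-- Dimension of an affine subspace: the rank of its direction. -/
noncomputable def adim (A : AffineSubspace ℝ V) : ℕ := Module.finrank ℝ A.direction

/-- `S` (of codimension `l`) is in general position with respect to the affine subspace `A`: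
if `A` is nonempty, then `S ∩ A` is empty when `dim A < l`, and is nonempty of dimension
`dim A − l` otherwise. -/
def GenPos (l : ℕ) (S A : AffineSubspace ℝ V) : Prop :=
  (A : Set V).Nonempty →
    ((adim A < l → S ⊓ A = ⊥) ∧
     (l ≤ adim A → S ⊓ A ≠ ⊥ ∧ adim (S ⊓ A) = adim A - l))

/-!
Let `x ∈ B₁ ∩ S` and let `G` be the face of `P` having `x` in its relative interior, so `G ⊆ B₁`.
By general position `S ∩ aff B₁` and `aff G` have directions that together span the direction of
`aff B₁`, so any `y ∈ B₁` is `x + s + g` with `s` along `S` and `g` along `G`. For small `ε > 0` the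
point `x - ε g` is in `G`, and the open segment from it to `y` contains `x + ε / (1 + ε) s`, a point
of `B₁ ∩ S`. If `B₁ ∩ S ⊆ B₂`, that point is in `B₂`, hence so is `y` because `B₂` is a face. By
symmetry, `B₁ ∩ S = B₂ ∩ S` forces `B₁ = B₂`.

The face `G` is exposed by a functional that is nonpositive on the cone of feasible directions at
`x` and vanishes only on its lineality space; it comes from separating that space from the finitely
many generators outside it.
-/

section IntrinsicCore

/-- The algebraic relative interior of a set: its points from which one can move a little, without
leaving the set, in every direction of its affine span. For a convex set in finite dimension this is
the usual relative interior. -/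
def intrinsicCore (C : Set V) : Set V :=
  {x ∈ C | ∀ g ∈ vectorSpan ℝ C, ∃ ε : ℝ, 0 < ε ∧ x + ε • g ∈ C}

theorem add_smul_mem_openSegment {𝕜 M : Type*} [Field 𝕜] [LinearOrder 𝕜] [IsStrictOrderedRing 𝕜]
    [AddCommGroup M] [Module 𝕜 M] {ε : 𝕜} (hε : 0 < ε) (x s g : M) :
    x + (ε / (1 + ε)) • s ∈ openSegment 𝕜 (x - ε • g) (x + s + g) := by
  have hε₁ : 0 < 1 + ε := add_pos one_pos hε
  refine ⟨1 / (1 + ε), ε / (1 + ε), div_pos one_pos hε₁, div_pos hε hε₁, ?_, ?_⟩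
  · rw [← add_div, div_self hε₁.ne']
  · match_scalars <;> field_simp
    ring

theorem subset_of_isExtreme_of_mem_intrinsicCore {P B C : Set V} {x : V} (hB : IsExtreme ℝ P B)
    (hCP : C ⊆ P) (hx : x ∈ intrinsicCore C) (hxB : x ∈ B) : C ⊆ B := by
  intro y hy
  obtain ⟨ε, hε, hw⟩ := hx.2 (x - y) (vsub_mem_vectorSpan ℝ hx.1 hy)
  have hseg : x ∈ openSegment ℝ y (x + ε • (x - y)) := by
    have hmem := add_smul_mem_openSegment hε x (0 : V) (y - x)
    rwa [smul_zero, add_zero, add_sub_cancel, openSegment_symm, sub_eq_add_neg, ← smul_neg,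
      neg_sub] at hmem
  exact hB.left_mem_of_mem_openSegment (hCP hy) (hCP hw) hxB hseg

theorem exists_pos_add_smul_mem_of_mem_hull {P : Set V} (hP : Convex ℝ P) {x g : V} (hx : x ∈ P)
    (hg : g ∈ PointedCone.hull ℝ ((x + ·) ⁻¹' P)) : ∃ ε : ℝ, 0 < ε ∧ x + ε • g ∈ P := by
  have hconv : Convex ℝ ((x + ·) ⁻¹' P) := hP.translate_preimage_right x
  have hpointed : (ConvexCone.hull ℝ ((x + ·) ⁻¹' P)).Pointed :=
    ConvexCone.subset_hull (by simpa using hx)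
  have hle : PointedCone.hull ℝ ((x + ·) ⁻¹' P) ≤ (ConvexCone.hull ℝ _).toPointedCone hpointed :=
    Submodule.span_le.2 ConvexCone.subset_hull
  obtain ⟨r, hr, hgr⟩ := (ConvexCone.mem_hull_of_convex hconv).1 (hle hg)
  exact ⟨r⁻¹, inv_pos.2 hr, (Set.mem_smul_set_iff_inv_smul_mem₀ hr.ne' _ _).1 hgr⟩

end IntrinsicCore

section GeneralPosition

theorem GenPos.adim_inf_add {l : ℕ} {S A : AffineSubspace ℝ V} (hA : GenPos l S A) {x : V}
    (hx : x ∈ S ⊓ A) : adim (S ⊓ A) + l = adim A := by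
  obtain ⟨hempty, hdim⟩ := hA ⟨x, hx.2⟩
  have hle : l ≤ adim A := by
    by_contra! hlt
    exact AffineSubspace.notMem_bot ℝ V x (hempty hlt ▸ hx)
  rw [(hdim hle).2, Nat.sub_add_cancel hle]

theorem GenPos.direction_inf_sup_direction {l : ℕ} {S A A' : AffineSubspace ℝ V}
    [FiniteDimensional ℝ A'.direction] (hA : GenPos l S A) (hA' : GenPos l S A') (hle : A ≤ A')
    {x : V} (hxS : x ∈ S) (hxA : x ∈ A) :
    (S ⊓ A').direction ⊔ A.direction = A'.direction := by
  have hdir := AffineSubspace.direction_le hle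
  have hdir' : (S ⊓ A').direction ≤ A'.direction := AffineSubspace.direction_le inf_le_right
  have := Submodule.finiteDimensional_of_le hdir
  have := Submodule.finiteDimensional_of_le hdir'
  have hinf : (S ⊓ A').direction ⊓ A.direction = (S ⊓ A).direction := by
    have hx : x ∈ S ⊓ A' := ⟨hxS, hle hxA⟩
    rw [← AffineSubspace.direction_inf_of_mem hx hxA, inf_assoc, inf_eq_right.2 hle]
  refine Submodule.eq_of_le_of_finrank_eq (sup_le hdir' hdir) ?_
  have hsum := Submodule.finrank_sup_add_finrank_inf_eq (S ⊓ A').direction A.direction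
  have hdimA := hA.adim_inf_add ⟨hxS, hxA⟩
  have hdimA' := hA'.adim_inf_add ⟨hxS, hle hxA⟩
  rw [hinf] at hsum
  unfold adim at hdimA hdimA'
  lia

theorem finiteDimensional_direction_affineSpan_of_subset_convexHull {B : Set V} {t : Finset V}
    (hB : B ⊆ convexHull ℝ (t : Set V)) : FiniteDimensional ℝ (affineSpan ℝ B).direction := by
  have hle : affineSpan ℝ B ≤ affineSpan ℝ (t : Set V) := by
    rw [← affineSpan_convexHull (𝕜 := ℝ) (t : Set V)]
    exact affineSpan_mono ℝ hB
  have := finiteDimensional_direction_affineSpan_of_finite ℝ t.finite_toSet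
  exact Submodule.finiteDimensional_of_le (AffineSubspace.direction_le hle)

end GeneralPosition

section Polytope

variable {E : Type*} [AddCommGroup E] [Module ℝ E] [TopologicalSpace E] [IsTopologicalAddGroup E]
  [ContinuousSMul ℝ E] [T2Space E]

theorem isClosed_lineal_of_fg {C : PointedCone ℝ E} (hC : C.FG) : IsClosed (C.lineal : Set E) := by
  obtain ⟨s, rfl⟩ := hC
  have hle : (PointedCone.hull ℝ (s : Set E)).lineal ≤ Submodule.span ℝ (s : Set E) :=
    fun g hg => PointedCone.hull_le_span ℝ _ hg.1
  have := Submodule.finiteDimensional_of_le hle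
  exact Submodule.closed_of_finiteDimensional _

variable [LocallyConvexSpace ℝ E]

theorem exists_strongDual_eq_zero_on_lineal_and_neg_on_generators (s : Finset E) :
    ∃ f : StrongDual ℝ E, (∀ g ∈ (PointedCone.hull ℝ (s : Set E)).lineal, f g = 0) ∧
      ∀ g ∈ s, g ∉ (PointedCone.hull ℝ (s : Set E)).lineal → f g < 0 := by
  set C := PointedCone.hull ℝ (s : Set E)
  let L : ProperCone ℝ E := ⟨(C.lineal : PointedCone ℝ E), isClosed_lineal_of_fg ⟨s, rfl⟩⟩
  have hsub : convexHull ℝ ((s : Set E) \ C.lineal) ⊆ (C : Set E) \ C.lineal :=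
    convexHull_min (Set.sdiff_subset_sdiff_left PointedCone.subset_hull)
      ((PointedCone.IsFaceOf.lineal C).isExtreme.convex_sdiff C.convex)
  obtain ⟨f, hfL, hfs⟩ := L.hyperplane_separation (convex_convexHull ℝ _)
    ((s.finite_toSet.sdiff).isCompact_convexHull (𝕜 := ℝ))
    (Set.disjoint_left.2 fun g hg => (hsub hg).2)
  refine ⟨f, fun g hg => ?_, fun g hg hgL => hfs g (subset_convexHull ℝ _ ⟨hg, hgL⟩)⟩
  have hneg := hfL (-g) (C.lineal.neg_mem hg)
  rw [map_neg] at hneg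
  linarith [hfL g hg]

theorem exists_strongDual_nonpos_and_mem_lineal_of_eq_zero {C : PointedCone ℝ E} (hC : C.FG) :
    ∃ f : StrongDual ℝ E, ∀ g ∈ C, f g ≤ 0 ∧ (f g = 0 → g ∈ C.lineal) := by
  obtain ⟨s, rfl⟩ := hC
  set C := PointedCone.hull ℝ (s : Set E)
  obtain ⟨f, hf_lineal, hf_neg⟩ := exists_strongDual_eq_zero_on_lineal_and_neg_on_generators s
  refine ⟨f, fun g hg => ?_⟩
  induction hg using Submodule.span_induction with
  | mem g hg =>
    by_cases hgL : g ∈ C.lineal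
    · exact ⟨(hf_lineal g hgL).le, fun _ => hgL⟩
    · have hlt := hf_neg g hg hgL
      exact ⟨hlt.le, fun h => absurd h hlt.ne⟩
  | zero => exact ⟨(map_zero f).le, fun _ => C.lineal.zero_mem⟩
  | add g g' _ _ ih ih' =>
    rw [map_add]
    exact ⟨add_nonpos ih.1 ih'.1, fun h =>
      C.lineal.add_mem (ih.2 (by linarith [ih.1, ih'.1])) (ih'.2 (by linarith [ih.1, ih'.1]))⟩
  | smul c g _ ih =>
    obtain ⟨c, hc₀⟩ := c
    rw [Nonneg.mk_smul, map_smul, smul_eq_mul]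
    refine ⟨mul_nonpos_of_nonneg_of_nonpos hc₀ ih.1, fun h => ?_⟩
    rcases mul_eq_zero.1 h with hc | hg
    · rw [hc, zero_smul]
      exact C.lineal.zero_mem
    · exact C.lineal.smul_mem _ (ih.2 hg)

theorem exists_isExposed_mem_intrinsicCore (t : Finset E) {x : E}
    (hx : x ∈ convexHull ℝ (t : Set E)) :
    ∃ G, IsExposed ℝ (convexHull ℝ (t : Set E)) G ∧ x ∈ intrinsicCore G := by
  set P := convexHull ℝ (t : Set E)
  set C := PointedCone.hull ℝ ((x + ·) ⁻¹' (t : Set E))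
  have hC : C.FG := Submodule.fg_span (t.finite_toSet.preimage (add_right_injective x).injOn)
  have hPC : P ⊆ (-x + ·) ⁻¹' C := convexHull_min
    (fun v hv => PointedCone.subset_hull (by simpa using hv)) (C.convex.translate_preimage_right _)
  obtain ⟨f, hf⟩ := exists_strongDual_nonpos_and_mem_lineal_of_eq_zero hC
  have hfmax : ∀ p ∈ P, f p ≤ f x := fun p hp => by simpa using (hf _ (hPC hp)).1
  have hxG : x ∈ f.toExposed P := ⟨hx, hfmax⟩
  have hspan : vectorSpan ℝ (f.toExposed P) ≤ C.lineal := by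
    rw [vectorSpan_eq_span_vsub_set_right ℝ hxG, Submodule.span_le]
    rintro _ ⟨p, hp, rfl⟩
    have hfp : f p = f x := (hfmax p hp.1).antisymm (hp.2 x hx)
    simpa [neg_add_eq_sub] using (hf _ (hPC hp.1)).2 (by simp [hfp])
  refine ⟨f.toExposed P, ContinuousLinearMap.toExposed.isExposed, hxG, fun g hg => ?_⟩
  have hgL := hspan hg
  have hfg : f g = 0 := by
    have hneg := (hf _ hgL.2).1
    rw [map_neg] at hneg
    linarith [(hf _ hgL.1).1]
  obtain ⟨ε, hε, hmem⟩ := exists_pos_add_smul_mem_of_mem_hull (convex_convexHull ℝ _) hx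
    (Submodule.span_mono (Set.preimage_mono (subset_convexHull ℝ _)) hgL.1)
  exact ⟨ε, hε, hmem, fun p hp => by simpa [hfg] using hfmax p hp⟩

variable {l : ℕ} {t : Finset E} {S : AffineSubspace ℝ E} {B B₁ B₂ : Set E}

theorem exists_mem_inter_mem_openSegment
    (hgp : ∀ F, IsExposed ℝ (convexHull ℝ (t : Set E)) F → GenPos l S (affineSpan ℝ F))
    (hB : IsExposed ℝ (convexHull ℝ (t : Set E)) B) (hmeet : (B ∩ (S : Set E)).Nonempty)
    {y : E} (hy : y ∈ B) : ∃ w ∈ B, ∃ z ∈ B ∩ (S : Set E), z ∈ openSegment ℝ w y := by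
  obtain ⟨x, hxB, hxS⟩ := hmeet
  obtain ⟨G, hG, hxG⟩ := exists_isExposed_mem_intrinsicCore t (hB.subset hxB)
  have hGB : G ⊆ B := subset_of_isExtreme_of_mem_intrinsicCore hB.isExtreme hG.subset hxG hxB
  have := finiteDimensional_direction_affineSpan_of_subset_convexHull hB.subset
  have hdir := (hgp G hG).direction_inf_sup_direction (hgp B hB) (affineSpan_mono ℝ hGB) hxS
    (subset_affineSpan ℝ _ hxG.1)
  have hyx : y - x ∈ (affineSpan ℝ B).direction := by
    rw [direction_affineSpan]
    exact vsub_mem_vectorSpan ℝ hy hxB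
  rw [← hdir] at hyx
  obtain ⟨s, hs, g, hg, hsg⟩ := Submodule.mem_sup.1 hyx
  obtain rfl : y = x + s + g := by rw [add_assoc, hsg, add_sub_cancel]
  rw [direction_affineSpan] at hg
  obtain ⟨ε, hε, hw⟩ := hxG.2 (-g) (neg_mem hg)
  rw [smul_neg, ← sub_eq_add_neg] at hw
  have hz := add_smul_mem_openSegment hε x s g
  refine ⟨_, hGB hw, _, ⟨?_, ?_⟩, hz⟩
  · exact (hB.convex (convex_convexHull ℝ _)).openSegment_subset (hGB hw) hy hz
  · rw [add_comm]
    exact AffineSubspace.vadd_mem_of_mem_direction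
      (Submodule.smul_mem _ _ (AffineSubspace.direction_le inf_le_left hs)) hxS

theorem subset_of_inter_subset
    (hgp : ∀ F, IsExposed ℝ (convexHull ℝ (t : Set E)) F → GenPos l S (affineSpan ℝ F))
    (hB₁ : IsExposed ℝ (convexHull ℝ (t : Set E)) B₁)
    (hB₂ : IsExtreme ℝ (convexHull ℝ (t : Set E)) B₂)
    (hmeet : (B₁ ∩ (S : Set E)).Nonempty) (hsub : B₁ ∩ (S : Set E) ⊆ B₂) : B₁ ⊆ B₂ := by
  intro y hy
  obtain ⟨w, hw, z, hz, hseg⟩ := exists_mem_inter_mem_openSegment hgp hB₁ hmeet hy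
  exact hB₂.right_mem_of_mem_openSegment (hB₁.subset hw) (hB₁.subset hy) (hsub hz) hseg

theorem stmt17_general
    (hgp : ∀ F, IsExposed ℝ (convexHull ℝ (t : Set E)) F → GenPos l S (affineSpan ℝ F))
    (hB₁ : IsExposed ℝ (convexHull ℝ (t : Set E)) B₁)
    (hB₂ : IsExposed ℝ (convexHull ℝ (t : Set E)) B₂)
    (hne : B₁ ≠ B₂) (hmeet : (B₁ ∩ (S : Set E)).Nonempty) :
    B₁ ∩ (S : Set E) ≠ B₂ ∩ (S : Set E) := by
  refine fun heq => hne (Set.Subset.antisymm ?_ ?_)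
  · exact subset_of_inter_subset hgp hB₁ hB₂.isExtreme hmeet
      (heq.trans_subset Set.inter_subset_left)
  · exact subset_of_inter_subset hgp hB₂ hB₁.isExtreme (heq ▸ hmeet)
      (heq.symm.trans_subset Set.inter_subset_left)

end Polytope

/-- Let `P ⊂ ℝ^n` be an `n`-dimensional polytope with `0` in its interior, `S` a linear
subspace of codimension `l ∈ {1,…,n−1}` in general position with respect to (intersections of)
the affine hulls of the faces of `P`, and `j ∈ {0,…,n−l−1}`. If `B₁ ≠ B₂` are
`(j+l)`-dimensional faces of `P` and `B₁ ∩ S ≠ ∅`, then `B₁ ∩ S ≠ B₂ ∩ S`. -/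
theorem stmt17 (n l j : ℕ) (hl1 : 1 ≤ l) (hln : l ≤ n - 1) (hj : j ≤ n - l - 1)
    (P : Set (Fin n → ℝ)) (hP : ∃ t : Finset (Fin n → ℝ), P = convexHull ℝ (t : Set (Fin n → ℝ)))
    (hPdim : adim (affineSpan ℝ P) = n) (h0 : (0 : Fin n → ℝ) ∈ interior P)
    (S : AffineSubspace ℝ (Fin n → ℝ)) (hS0 : (0 : Fin n → ℝ) ∈ S)
    (hSdim : adim S = n - l)
    (hgp : ∀ G : Finset (Set (Fin n → ℝ)), (∀ F ∈ G, IsExposed ℝ P F) →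
      GenPos l S (⨅ F ∈ G, affineSpan ℝ F))
    (B1 B2 : Set (Fin n → ℝ)) (hB1 : IsExposed ℝ P B1) (hB2 : IsExposed ℝ P B2)
    (hd1 : adim (affineSpan ℝ B1) = j + l) (hd2 : adim (affineSpan ℝ B2) = j + l)
    (hne : B1 ≠ B2) (hB1S : (B1 ∩ (S : Set (Fin n → ℝ))).Nonempty) :
    B1 ∩ (S : Set (Fin n → ℝ)) ≠ B2 ∩ (S : Set (Fin n → ℝ)) := by
  obtain ⟨t, rfl⟩ := hP
  exact stmt17_general (fun F hF => by simpa using hgp {F} (by simpa using hF)) hB1 hB2 hne hB1S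
end
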